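/- For every permutation ω ∈ S_n, the parabolic embedding satisfies i_n(s_ω) = s_{ω'}, where ω' ∈ S_{n+1} is the permutation fixing n+1 and agreeing with ω on {1,...,n}, and s_ω ∈ ℂ[GL(n,q)], s_{ω'} ∈ ℂ[GL(n+1,q)] are the corresponding Hecke basis elements. In particular, i_n maps H_q(n) into H_q(n+1), and its restriction to H_q(n) is a unital algebra embedding of Iwahori–Hecke algebras sending s_e to s_e and s_{(i,i+1)} to s_{(i,i+1)} for 1 ≤ i ≤ n−1. (Proposition 2.17: the parabolic embeddings restrict to the standard embeddings of Hecke algebras.) -/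

import Mathlib

variable (F : Type) [Field F] [Fintype F] [DecidableEq F]

/-- `GL(n,q)`, the group of invertible `n × n` matrices over the finite field `F` (`q = |F|`). -/
abbrev GLn (n : ℕ) := GL (Fin n) F

/-- The complex group algebra `ℂ[GL(n,q)]`. -/
abbrev GA (n : ℕ) := MonoidAlgebra ℂ (GLn F n)

/-- `b` is an invertible upper-triangular matrix, i.e. an element of the Borel subgroup `B_n`. -/
def IsUT {n : ℕ} (b : GLn F n) : Prop :=
  ∀ i j : Fin n, j < i → (b : Matrix (Fin n) (Fin n) F) i j = 0

/-- The permutation matrix of `ω ∈ S_n`, as an element of `GL(n,q)`. -/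
noncomputable def permGL {n : ℕ} (ω : Equiv.Perm (Fin n)) : GLn F n :=
  Matrix.GeneralLinearGroup.mkOfDetNeZero (ω.permMatrix F) (by
    rw [Matrix.det_permutation]
    rcases Int.units_eq_one_or (Equiv.Perm.sign ω) with h | h <;> simp [h])

open scoped Classical in
/-- The Hecke basis element `s_ω = (1/|B_n|) ∑_{g ∈ B_n ω B_n} e_g ∈ ℂ[GL(n,q)]`. -/
noncomputable def heckeS {n : ℕ} (ω : Equiv.Perm (Fin n)) : GA F n :=
  ((Finset.univ.filter (fun b : GLn F n => IsUT F b)).card : ℂ)⁻¹ •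
    ∑ g ∈ Finset.univ.filter
        (fun g : GLn F n => ∃ b₁ b₂ : GLn F n, IsUT F b₁ ∧ IsUT F b₂ ∧ g = b₁ * permGL F ω * b₂),
      MonoidAlgebra.single g (1 : ℂ)

/-- The Iwahori–Hecke algebra `H_q(n)`: the set of `B_n`-biinvariant elements of `ℂ[GL(n,q)]`. -/
def heckeSet (n : ℕ) : Set (GA F n) :=
  {a | ∀ b₁ b₂ g : GLn F n, IsUT F b₁ → IsUT F b₂ → a.coeff (b₁ * g * b₂) = a.coeff g}

open scoped Classical in
/-- `Ext(g)`: the set of `h ∈ GL(n+1,q)` whose top-left `n × n` corner is `g` and whose last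
row vanishes except possibly at the `(n+1,n+1)` entry. -/
noncomputable def ExtSet {n : ℕ} (g : GLn F n) : Finset (GLn F (n + 1)) :=
  Finset.univ.filter (fun h =>
    (∀ i j : Fin n, (h : Matrix (Fin (n + 1)) (Fin (n + 1)) F) i.castSucc j.castSucc
        = (g : Matrix (Fin n) (Fin n) F) i j) ∧
    (∀ j : Fin n, (h : Matrix (Fin (n + 1)) (Fin (n + 1)) F) (Fin.last n) j.castSucc = 0))

/-- The parabolic embedding `i_n : ℂ[GL(n,q)] → ℂ[GL(n+1,q)]`,
`e_g ↦ (1/((q-1)q^n)) ∑_{h ∈ Ext(g)} e_h`. -/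
noncomputable def paraEmb (n : ℕ) : GA F n →ₗ[ℂ] GA F (n + 1) :=
  (Finsupp.lsum ℂ (fun g => LinearMap.toSpanSingleton ℂ (GA F (n + 1))
    ((((Fintype.card F : ℂ) - 1) * (Fintype.card F : ℂ) ^ n)⁻¹ •
      ∑ h ∈ ExtSet F g, MonoidAlgebra.single h (1 : ℂ)))) ∘ₗ
    (MonoidAlgebra.coeffLinearEquiv ℂ).toLinearMap

/-- The extension relation. -/
def ExtRel {n : ℕ} (g : GLn F n) (h : GLn F (n + 1)) : Prop :=
  (∀ i j : Fin n, (h : Matrix (Fin (n + 1)) (Fin (n + 1)) F) i.castSucc j.castSucc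
        = (g : Matrix (Fin n) (Fin n) F) i j) ∧
    (∀ j : Fin n, (h : Matrix (Fin (n + 1)) (Fin (n + 1)) F) (Fin.last n) j.castSucc = 0)

theorem mem_ExtSet {n : ℕ} (g : GLn F n) (h : GLn F (n + 1)) :
    h ∈ ExtSet F g ↔ ExtRel F g h := by
  simp [ExtSet, ExtRel]

/-- Block upper-triangular matrix. -/
def blk {n : ℕ} (A : Matrix (Fin n) (Fin n) F) (d : F) (v : Fin n → F) :
    Matrix (Fin (n + 1)) (Fin (n + 1)) F :=
  fun i j => Fin.lastCases (motive := fun _ => F)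
    (Fin.lastCases (motive := fun _ => F) d (fun _ => 0) j)
    (fun i' => Fin.lastCases (motive := fun _ => F) (v i') (fun j' => A i' j') j) i

section
variable {F}

theorem blk_det {n : ℕ} (A : Matrix (Fin n) (Fin n) F) (d : F) (v : Fin n → F) :
    (blk F A d v).det = d * A.det := by
  rw [Matrix.det_succ_row _ (Fin.last n), Fin.sum_univ_castSucc]
  have : (blk F A d v).submatrix Fin.castSucc Fin.castSucc = A := by
    ext i j
    simp [blk]
  simp [blk] at this ⊢
  rw [this]
  exact Or.inl rfl

theorem blk_eta {n : ℕ} (M : Matrix (Fin (n + 1)) (Fin (n + 1)) F)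
    (h : ∀ j : Fin n, M (Fin.last n) j.castSucc = 0) :
    M = blk F (fun i j => M i.castSucc j.castSucc) (M (Fin.last n) (Fin.last n))
      (fun i => M i.castSucc (Fin.last n)) := by
  ext i j
  refine Fin.lastCases ?_ (fun i => ?_) i <;> refine Fin.lastCases ?_ (fun j => ?_) j <;>
    simp [blk, h]

end

/-- Block upper-triangular invertible matrix. -/
noncomputable def blkGL {n : ℕ} (g : GLn F n) (d : Fˣ) (v : Fin n → F) : GLn F (n + 1) :=
  Matrix.GeneralLinearGroup.mkOfDetNeZero (blk F (g : Matrix (Fin n) (Fin n) F) d v) (by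
    rw [blk_det]
    exact mul_ne_zero d.ne_zero (Matrix.GeneralLinearGroup.det_ne_zero g))

variable {F}

theorem blkGL_ext {n : ℕ} (g : GLn F n) (d : Fˣ) (v : Fin n → F) :
    ExtRel F g (blkGL F g d v) := by
  constructor <;> intros <;> simp [blkGL, blk, Matrix.GeneralLinearGroup.mkOfDetNeZero]

theorem ext_corner {n : ℕ} {h : GLn F (n + 1)}
    (hh : ∀ j : Fin n, (h : Matrix (Fin (n + 1)) (Fin (n + 1)) F) (Fin.last n) j.castSucc = 0) :
    (h : Matrix (Fin (n + 1)) (Fin (n + 1)) F) (Fin.last n) (Fin.last n) ≠ 0 ∧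
    ∃ g : GLn F n, ExtRel F g h := by
  have h0 := Matrix.GeneralLinearGroup.det_ne_zero h
  have h1 := congrArg Matrix.det (blk_eta (h : Matrix (Fin (n + 1)) (Fin (n + 1)) F) hh)
  rw [h1] at h0
  replace h0 := (blk_det _ _ _).symm.trans_ne h0
  refine ⟨left_ne_zero_of_mul h0,
    Matrix.GeneralLinearGroup.mkOfDetNeZero _ (right_ne_zero_of_mul h0), ?_, hh⟩
  intro i j
  rfl

theorem ExtRel.unique {n : ℕ} {g g' : GLn F n} {h : GLn F (n + 1)}
    (h1 : ExtRel F g h) (h2 : ExtRel F g' h) : g = g' := by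
  apply Units.ext
  ext i j
  rw [← h1.1, ← h2.1]

theorem ExtRel.exists_blk {n : ℕ} {g : GLn F n} {h : GLn F (n + 1)}
    (h1 : ExtRel F g h) : ∃ d v, blkGL F g d v = h := by
  refine ⟨Units.mk0 _ (ext_corner h1.2).1,
    fun i => (h : Matrix (Fin (n + 1)) (Fin (n + 1)) F) i.castSucc (Fin.last n), ?_⟩
  apply Units.ext
  conv_rhs => rw [blk_eta _ h1.2]
  simp only [h1.1]
  rfl

theorem ExtRel.mul {n : ℕ} {g g' : GLn F n} {h h' : GLn F (n + 1)}
    (h1 : ExtRel F g h) (h2 : ExtRel F g' h') : ExtRel F (g * g') (h * h') := by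
  constructor
  · intro i j
    simp [Matrix.mul_apply, Fin.sum_univ_castSucc, h1.1, h2.1, h2.2]
  · intro j
    simp [Matrix.mul_apply, Fin.sum_univ_castSucc, h1.2, h2.2]

theorem ExtRel.one {n : ℕ} : ExtRel F (1 : GLn F n) 1 := by
  constructor
  · intro i j
    simp [Matrix.one_apply]
  · intro j
    simp [Matrix.one_apply, (Fin.castSucc_lt_last j).ne']

theorem card_ExtSet {n : ℕ} (g : GLn F n) :
    ((ExtSet F g).card : ℂ) = ((Fintype.card F : ℂ) - 1) * (Fintype.card F : ℂ) ^ n := by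
  classical
  have : ExtSet F g = Finset.univ.image (fun p : Fˣ × (Fin n → F) => blkGL F g p.1 p.2) := by
    ext h
    rw [mem_ExtSet]
    simp only [Finset.mem_image, Finset.mem_univ, true_and, Prod.exists]
    constructor
    · exact fun h1 => h1.exists_blk
    · rintro ⟨d, v, rfl⟩
      exact blkGL_ext _ _ _
  rw [this, Finset.card_image_of_injective]
  · rw [Finset.card_univ, Fintype.card_prod, Fintype.card_units]
    simp [Nat.cast_sub (Fintype.card_pos : 0 < Fintype.card F)]
  · rintro ⟨d, v⟩ ⟨d', v'⟩ he
    have he' : blk F (g : Matrix (Fin n) (Fin n) F) d v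
      = blk F (g : Matrix (Fin n) (Fin n) F) d' v' := congrArg Units.val he
    have h1 := congrFun (congrFun he' (Fin.last n)) (Fin.last n)
    have h2 : v = v' := by
      funext i
      simpa [blk] using congrFun (congrFun he' i.castSucc) (Fin.last n)
    simp only [blk, Fin.lastCases_last] at h1
    rw [Units.ext h1, h2]

theorem cst_ne (F : Type) [Field F] [Fintype F] [DecidableEq F] (n : ℕ) : ((Fintype.card F : ℂ) - 1) * (Fintype.card F : ℂ) ^ n ≠ 0 := by
  rw [← card_ExtSet (1 : GLn F n)]
  exact_mod_cast Finset.card_ne_zero_of_mem ((mem_ExtSet F _ _).2 ExtRel.one)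

theorem ExtRel.inv {n : ℕ} {g : GLn F n} {h : GLn F (n + 1)}
    (h1 : ExtRel F g h) : ExtRel F g⁻¹ h⁻¹ := by
  classical
  -- left multiplication by `h` is a bijection from `Ext(g⁻¹)` to `Ext(1)`
  have hs : (ExtSet F g⁻¹).image (fun k => h * k) = ExtSet F 1 := by
    apply Finset.eq_of_subset_of_card_le
    · intro k hk
      obtain ⟨k, hk', rfl⟩ := Finset.mem_image.1 hk
      rw [mem_ExtSet] at hk' ⊢
      simpa using h1.mul hk'
    · rw [Finset.card_image_of_injective _ (mul_right_injective h)]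
      have := (card_ExtSet (1 : GLn F n)).trans (card_ExtSet g⁻¹).symm
      exact le_of_eq (by exact_mod_cast this)
  have : (1 : GLn F (n + 1)) ∈ ExtSet F (1 : GLn F n) := (mem_ExtSet F _ _).2 ExtRel.one
  rw [← hs] at this
  obtain ⟨k, hk, he⟩ := Finset.mem_image.1 this
  rw [← eq_inv_of_mul_eq_one_right he]
  exact (mem_ExtSet F _ _).1 hk

theorem ut_iff {n : ℕ} {g : GLn F n} {h : GLn F (n + 1)} (h1 : ExtRel F g h) :
    IsUT F h ↔ IsUT F g := by
  constructor
  · intro hu i j hij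
    rw [← h1.1]
    exact hu _ _ (by simpa using hij)
  · intro hu i j
    refine Fin.lastCases ?_ (fun i => ?_) i <;> refine Fin.lastCases ?_ (fun j => ?_) j
    · simp
    · intro _
      exact h1.2 j
    · intro hl
      exact absurd hl (not_lt.2 (Fin.le_last _))
    · intro hl
      rw [h1.1]
      exact hu _ _ (by simpa using hl)

theorem ut_ext {n : ℕ} {h : GLn F (n + 1)} (hu : IsUT F h) :
    ∃ g, IsUT F g ∧ ExtRel F g h := by
  obtain ⟨g, hg⟩ := (ext_corner (h := h) (fun j => hu _ _ (Fin.castSucc_lt_last j))).2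
  exact ⟨g, (ut_iff hg).1 hu, hg⟩

theorem paraEmb_single {n : ℕ} (g : GLn F n) (r : ℂ) :
    paraEmb F n (MonoidAlgebra.single g r) =
      r • ((((Fintype.card F : ℂ) - 1) * (Fintype.card F : ℂ) ^ n)⁻¹ •
      ∑ h ∈ ExtSet F g, MonoidAlgebra.single h (1 : ℂ)) := by
  simp [paraEmb]

open scoped Classical in
theorem paraEmb_coeff {n : ℕ} (a : GA F n) (h : GLn F (n + 1)) :
    (paraEmb F n a).coeff h = (((Fintype.card F : ℂ) - 1) * (Fintype.card F : ℂ) ^ n)⁻¹ *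
      ∑ g : GLn F n, if ExtRel F g h then a.coeff g else 0 := by
  induction a using MonoidAlgebra.induction_linear with
  | zero => simp
  | add a b ha hb =>
    rw [map_add, MonoidAlgebra.coeff_add, Finsupp.add_apply, ha, hb, ← mul_add,
      ← Finset.sum_add_distrib]
    congr 1
    apply Finset.sum_congr rfl
    intro g _
    split_ifs <;> simp
  | single g r =>
    rw [paraEmb_single]
    rw [Finset.sum_eq_single g]
    · simp only [MonoidAlgebra.coeff_smul, MonoidAlgebra.coeff_sum, Finsupp.smul_apply,
        Finsupp.finsetSum_apply, MonoidAlgebra.coeff_single, Finsupp.single_apply, smul_eq_mul,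
        Finset.sum_ite_eq', mem_ExtSet]
      split_ifs <;> simp [mul_comm]
    · intro g' _ hne
      simp [Finsupp.single_apply, hne.symm]
    · simp

theorem paraEmb_coeff_of {n : ℕ} (a : GA F n) {g : GLn F n} {h : GLn F (n + 1)}
    (hg : ExtRel F g h) :
    (paraEmb F n a).coeff h =
      (((Fintype.card F : ℂ) - 1) * (Fintype.card F : ℂ) ^ n)⁻¹ * a.coeff g := by
  classical
  rw [paraEmb_coeff, Finset.sum_eq_single g, if_pos hg]
  · intro g' _ hne
    rw [if_neg]
    exact fun hh => hne (hh.unique hg)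
  · simp

theorem paraEmb_coeff_zero {n : ℕ} (a : GA F n) {h : GLn F (n + 1)}
    (hg : ∀ g, ¬ ExtRel F g h) : (paraEmb F n a).coeff h = 0 := by
  classical
  rw [paraEmb_coeff]
  simp [hg]

theorem paraEmb_inj (n : ℕ) : Function.Injective (paraEmb F n) := by
  intro a b hab
  ext g
  have h1 := paraEmb_coeff_of a (blkGL_ext g 1 0)
  rw [hab, paraEmb_coeff_of b (blkGL_ext g 1 0)] at h1
  exact (mul_left_cancel₀ (inv_ne_zero (cst_ne F n)) h1).symm

theorem paraEmb_hecke (n : ℕ) (a : GA F n) (ha : a ∈ heckeSet F n) :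
    paraEmb F n a ∈ heckeSet F (n + 1) := by
  intro b₁ b₂ h u₁ u₂
  obtain ⟨c₁, v₁, e₁⟩ := ut_ext u₁
  obtain ⟨c₂, v₂, e₂⟩ := ut_ext u₂
  by_cases hg : ∃ g, ExtRel F g h
  · obtain ⟨g, hg⟩ := hg
    rw [paraEmb_coeff_of a hg, paraEmb_coeff_of a ((e₁.mul hg).mul e₂), ha _ _ _ v₁ v₂]
  · rw [paraEmb_coeff_zero a (not_exists.1 hg), paraEmb_coeff_zero]
    intro g hg'
    apply hg
    refine ⟨c₁⁻¹ * g * c₂⁻¹, ?_⟩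
    have := (e₁.inv.mul hg').mul e₂.inv
    simpa [mul_assoc] using this

theorem paraEmb_mul (n : ℕ) (a b : GA F n) :
    paraEmb F n (a * b) = paraEmb F n a * paraEmb F n b := by
  classical
  induction a using MonoidAlgebra.induction_linear with
  | zero => simp
  | add a a' ha hb => simp only [add_mul, map_add, ha, hb]
  | single g r =>
  induction b using MonoidAlgebra.induction_linear with
  | zero => simp
  | add a a' ha hb => simp only [mul_add, map_add, ha, hb]
  | single g' r' =>
  rw [MonoidAlgebra.single_mul_single, paraEmb_single, paraEmb_single, paraEmb_single]
  have key : (∑ h ∈ ExtSet F g, MonoidAlgebra.single h (1 : ℂ)) *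
      (∑ h ∈ ExtSet F g', MonoidAlgebra.single h (1 : ℂ)) =
      (((Fintype.card F : ℂ) - 1) * (Fintype.card F : ℂ) ^ n) •
        ∑ h ∈ ExtSet F (g * g'), MonoidAlgebra.single h (1 : ℂ) := by
    rw [Finset.sum_mul]
    have : ∀ h ∈ ExtSet F g, MonoidAlgebra.single h (1 : ℂ) *
      (∑ h ∈ ExtSet F g', MonoidAlgebra.single h (1 : ℂ)) =
        ∑ h ∈ ExtSet F (g * g'), MonoidAlgebra.single h (1 : ℂ) := by
      intro h hh
      rw [mem_ExtSet] at hh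
      rw [Finset.mul_sum]
      refine Finset.sum_bij' (fun k _ => h * k) (fun k _ => h⁻¹ * k) ?_ ?_ ?_ ?_ ?_
      · intro k hk
        rw [mem_ExtSet] at *
        exact hh.mul hk
      · intro k hk
        rw [mem_ExtSet] at *
        simpa using hh.inv.mul hk
      · simp
      · simp
      · intro k _
        simp [MonoidAlgebra.single_mul_single]
    rw [Finset.sum_congr rfl this, Finset.sum_const, ← card_ExtSet g, Nat.cast_smul_eq_nsmul]
  rw [smul_mul_smul_comm, smul_mul_smul_comm, key, mul_smul (_ : ℂ)⁻¹,
    inv_smul_smul₀ (cst_ne F n)]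

open scoped Classical in
theorem card_ut (n : ℕ) :
    ((Finset.univ.filter (fun b : GLn F (n + 1) => IsUT F b)).card : ℂ) =
    (((Fintype.card F : ℂ) - 1) * (Fintype.card F : ℂ) ^ n) *
      ((Finset.univ.filter (fun b : GLn F n => IsUT F b)).card : ℂ) := by
  have : Finset.univ.filter (fun b : GLn F (n + 1) => IsUT F b) =
      (Finset.univ.filter (fun b : GLn F n => IsUT F b)).biUnion (fun b => ExtSet F b) := by
    ext h
    simp only [Finset.mem_filter, Finset.mem_univ, true_and, Finset.mem_biUnion, mem_ExtSet]
    exact ⟨ut_ext, fun ⟨g, hg, e⟩ => (ut_iff e).2 hg⟩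
  rw [this, Finset.card_biUnion]
  · rw [Nat.cast_sum, Finset.sum_congr rfl (fun g _ => card_ExtSet g)]
    simp [mul_comm]
  · intro g _ g' _ hne
    rw [Function.onFun, Finset.disjoint_left]
    intro h h1 h2
    rw [mem_ExtSet] at h1 h2
    exact hne (h1.unique h2)

open scoped Classical in
theorem heckeS_coeff {n : ℕ} (ω : Equiv.Perm (Fin n)) (g : GLn F n) :
    (heckeS F ω).coeff g = ((Finset.univ.filter (fun b : GLn F n => IsUT F b)).card : ℂ)⁻¹ *
      if (∃ b₁ b₂ : GLn F n, IsUT F b₁ ∧ IsUT F b₂ ∧ g = b₁ * permGL F ω * b₂) then 1 else 0 := by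
  simp only [heckeS, MonoidAlgebra.coeff_smul, MonoidAlgebra.coeff_sum, Finsupp.smul_apply,
    Finsupp.finsetSum_apply, MonoidAlgebra.coeff_single, Finsupp.single_apply, smul_eq_mul,
    Finset.sum_ite_eq', Finset.mem_filter, Finset.mem_univ, true_and]

theorem perm_ext {n : ℕ} (ω : Equiv.Perm (Fin n)) (ω' : Equiv.Perm (Fin (n + 1)))
    (hl : ω' (Fin.last n) = Fin.last n) (hω : ∀ i : Fin n, ω' i.castSucc = (ω i).castSucc) :
    ExtRel F (permGL F ω) (permGL F ω') := by
  constructor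
  · intro i j
    simp [permGL, Matrix.GeneralLinearGroup.mkOfDetNeZero, Equiv.Perm.permMatrix,
      PEquiv.toMatrix_apply, hω]
  · intro j
    simp [permGL, Matrix.GeneralLinearGroup.mkOfDetNeZero, Equiv.Perm.permMatrix,
      PEquiv.toMatrix_apply, hl, (Fin.castSucc_lt_last j).ne']

theorem paraEmb_heckeS {n : ℕ} (ω : Equiv.Perm (Fin n)) (ω' : Equiv.Perm (Fin (n + 1)))
    (hl : ω' (Fin.last n) = Fin.last n) (hω : ∀ i : Fin n, ω' i.castSucc = (ω i).castSucc) :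
    paraEmb F n (heckeS F ω) = heckeS F ω' := by
  classical
  have hp := perm_ext (F := F) ω ω' hl hω
  ext h
  rw [heckeS_coeff]
  by_cases hg : ∃ g, ExtRel F g h
  · obtain ⟨g, hg⟩ := hg
    rw [paraEmb_coeff_of _ hg, heckeS_coeff, card_ut, ← mul_assoc, ← mul_inv]
    apply congrArg
    apply if_congr _ rfl rfl
    constructor
    · rintro ⟨b₁, b₂, u₁, u₂, rfl⟩
      have e₁ := blkGL_ext b₁ 1 0
      have e₂ := blkGL_ext b₂ 1 0
      have e₃ := (hg.mul e₂.inv).mul hp.inv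
      rw [mul_inv_cancel_right, mul_inv_cancel_right] at e₃
      refine ⟨_, _, (ut_iff e₃).2 u₁, (ut_iff e₂).2 u₂, ?_⟩
      simp [mul_assoc]
    · rintro ⟨b₁, b₂, u₁, u₂, rfl⟩
      obtain ⟨c₁, v₁, e₁⟩ := ut_ext u₁
      obtain ⟨c₂, v₂, e₂⟩ := ut_ext u₂
      exact ⟨c₁, c₂, v₁, v₂, hg.unique ((e₁.mul hp).mul e₂)⟩
  · rw [paraEmb_coeff_zero _ (not_exists.1 hg), if_neg, mul_zero]
    rintro ⟨b₁, b₂, u₁, u₂, rfl⟩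
    obtain ⟨c₁, v₁, e₁⟩ := ut_ext u₁
    obtain ⟨c₂, v₂, e₂⟩ := ut_ext u₂
    exact hg ⟨_, (e₁.mul hp).mul e₂⟩

variable (F)

/-- **Proposition 2.17** (the parabolic embeddings restrict to the standard embeddings of
Iwahori–Hecke algebras): `i_n(s_ω) = s_{ω'}`, where `ω' ∈ S_{n+1}` fixes `n+1` and agrees
with `ω` on `{1,...,n}`; consequently `i_n` maps `H_q(n)` into `H_q(n+1)` and restricts to a
unital algebra embedding of Hecke algebras. -/
theorem paraEmb_restricts_to_hecke (n : ℕ) :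
    (∀ (ω : Equiv.Perm (Fin n)) (ω' : Equiv.Perm (Fin (n + 1))),
      ω' (Fin.last n) = Fin.last n → (∀ i : Fin n, ω' i.castSucc = (ω i).castSucc) →
      paraEmb F n (heckeS F ω) = heckeS F ω') ∧
    (∀ a ∈ heckeSet F n, paraEmb F n a ∈ heckeSet F (n + 1)) ∧
    (∀ a ∈ heckeSet F n, ∀ b ∈ heckeSet F n,
      paraEmb F n (a * b) = paraEmb F n a * paraEmb F n b) ∧
    Set.InjOn (paraEmb F n) (heckeSet F n) := by
  exact ⟨fun ω ω' hl hω => paraEmb_heckeS ω ω' hl hω, paraEmb_hecke n,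
    fun a _ b _ => paraEmb_mul n a b, (paraEmb_inj n).injOn⟩
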